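/- Let n ≥ 1, d ≥ 1, let I be a finite type, let p : I → ℝ with p(i) > 0 and ∑_i p(i) = 1, and let φ : I → Fin n → (Fin d → ℂ) be unit vectors (‖φ(i,j)‖ = 1 for all i, j). Define the fully separable matrix ρ ∈ Matrix (Fin n → Fin d) (Fin n → Fin d) ℂ by ρ_{u,u'} = ∑_i p(i) ∏_j φ(i,j)(u(j)) · conj(φ(i,j)(u'(j))). If ρ is symmetric in the sense that ρ_{u∘σ, u'∘σ'} = ρ_{u,u'} for all permutations σ, σ' of Fin n (equivalently P⁺_n ρ P⁺_n = ρ), then there exist unit vectors ψ : I → (Fin d → ℂ) such that ρ_{u,u'} = ∑_i p(i) ∏_j ψ(i)(u(j)) · conj(ψ(i)(u'(j))); i.e., ρ is a convex combination of n-fold tensor powers |ψ_i⟩⟨ψ_i|^{⊗n} of pure states. -/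

import Mathlib

/-!
If `ρ = ∑ i, p i |Φ i⟩⟨Φ i|` with positive weights and `ρ` is fixed by the permutation operators,
then so is each `Φ i`: the entries of `ρ` give `∑ i, p i |Φ i v - Φ i u| ^ 2 = 0` whenever `v` is a
permutation of `u`. Moreover a product vector `⨂ j, f j` with nonzero factors can only be fixed by
the transposition of `i` and `j` if `f i` and `f j` are proportional, as one sees by freezing all
other tensor slots at indices where the factors do not vanish. Hence all factors of `Φ i` define
the same projector, and `|Φ i⟩⟨Φ i|` is a tensor power.
-/

open Finset Matrix Function

section Proportional

variable {κ R : Type*} [Fintype κ] [CommSemiring R] [StarRing R]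

lemma dotProduct_star_smul_vecMulVec_star_of_proportional {x y : κ → R}
    (h : ∀ a b, x a * y b = x b * y a) :
    (x ⬝ᵥ star x) • vecMulVec y (star y) = (y ⬝ᵥ star y) • vecMulVec x (star x) := by
  ext a b
  simp only [Matrix.smul_apply, vecMulVec_apply, dotProduct, Pi.star_apply, smul_eq_mul, sum_mul]
  refine sum_congr rfl fun k _ => ?_
  calc x k * star (x k) * (y a * star (y b)) = x k * y a * star (x k * y b) := by
        rw [star_mul']; ring
    _ = x a * y k * star (x b * y k) := by rw [h k a, h k b]
    _ = y k * star (y k) * (x a * star (x b)) := by rw [star_mul']; ring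

lemma dotProduct_star_eq_sum_norm_sq {𝕜 : Type*} [RCLike 𝕜] (x : κ → 𝕜) :
    x ⬝ᵥ star x = ((∑ k, ‖x k‖ ^ 2 : ℝ) : 𝕜) := by
  simp [dotProduct, RCLike.mul_conj]

end Proportional

section RankOneDecomposition

variable {𝕜 I m : Type*} [RCLike 𝕜] [Fintype I]

lemma apply_eq_of_sum_smul_vecMulVec_star_row_eq {p : I → ℝ} (hp : ∀ i, 0 ≤ p i) {A : I → m → 𝕜}
    {u v : m} (h : (∑ i, p i • vecMulVec (A i) (star (A i))).row v =
      (∑ i, p i • vecMulVec (A i) (star (A i))).row u) {i : I} (hi : p i ≠ 0) :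
    A i v = A i u := by
  have entry_eq (w : m) : ∑ i, (p i : 𝕜) * (A i v * star (A i w)) =
      ∑ i, (p i : 𝕜) * (A i u * star (A i w)) := by
    simpa [Matrix.sum_apply, vecMulVec_apply, RCLike.real_smul_eq_coe_mul] using congrFun h w
  have sum_mul_star_eq_zero :
      ∑ i, (p i : 𝕜) * ((A i v - A i u) * star (A i v - A i u)) = 0 := by
    simp only [star_sub, sub_mul, mul_sub, sum_sub_distrib, entry_eq, sub_self]
  have sum_norm_sq_eq_zero : ∑ i, p i * ‖A i v - A i u‖ ^ 2 = 0 := by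
    simp only [RCLike.star_def, RCLike.mul_conj] at sum_mul_star_eq_zero
    exact_mod_cast sum_mul_star_eq_zero
  have norm_sq_eq_zero : p i * ‖A i v - A i u‖ ^ 2 = 0 :=
    (sum_eq_zero_iff_of_nonneg fun i _ => mul_nonneg (hp i) (sq_nonneg _)).mp
      sum_norm_sq_eq_zero i (mem_univ i)
  simpa [hi, sub_eq_zero] using norm_sq_eq_zero

end RankOneDecomposition

section ProductVector

variable {ι κ : Type*}

/-- The product vector `⨂ j, f j`, in the product basis of the tensor power, whose elements are
labelled by the functions `u : ι → κ`. The tensor power of `x` is `productVector fun _ => x`. -/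
def productVector {M : Type*} [CommMonoid M] [Fintype ι] (f : ι → κ → M) (u : ι → κ) : M :=
  ∏ j, f j (u j)

lemma vecMulVec_star_productVector_apply {R : Type*} [CommSemiring R] [StarRing R] [Fintype ι]
    (f : ι → κ → R) (u u' : ι → κ) :
    vecMulVec (productVector f) (star (productVector f)) u u' =
      ∏ j, f j (u j) * (starRingEnd R) (f j (u' j)) := by
  simp [vecMulVec_apply, productVector, prod_mul_distrib, ← starRingEnd_apply]

variable [DecidableEq ι]

lemma update_update_comp_swap (k : ι → κ) (i j : ι) (a b : κ) :
    update (update k i a) j b ∘ Equiv.swap i j = update (update k j a) i b := by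
  ext m
  grind

variable [Fintype ι]

lemma productVector_update_update {M : Type*} [CommMonoid M] (f : ι → κ → M) (k : ι → κ)
    {i j : ι} (hij : i ≠ j) (a b : κ) :
    productVector f (update (update k i a) j b) =
      f i a * f j b * ∏ m ∈ {i, j}ᶜ, f m (k m) := by
  rw [productVector, ← prod_mul_prod_compl {i, j}, prod_pair hij]
  congr 1
  · simp [hij]
  · refine prod_congr rfl fun m hm => ?_
    simp_all

lemma proportional_of_productVector_comp_swap {M₀ : Type*} [CommMonoidWithZero M₀]
    [IsCancelMulZero M₀] {f : ι → κ → M₀} (hf : ∀ m, f m ≠ 0) {i j : ι}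
    (h : ∀ u, productVector f (u ∘ Equiv.swap i j) = productVector f u) (a b : κ) :
    f i a * f j b = f i b * f j a := by
  obtain rfl | hij := eq_or_ne i j
  · exact mul_comm _ _
  choose k hk using fun m => Function.ne_iff.mp (hf m)
  have : Nontrivial M₀ := nontrivial_of_ne _ _ (hk i)
  have swapped := h (update (update k i a) j b)
  rw [update_update_comp_swap, update_comm hij.symm, productVector_update_update f k hij,
    productVector_update_update f k hij] at swapped
  exact (mul_right_cancel₀ (prod_ne_zero_iff.mpr fun m _ => hk m) swapped).symm

end ProductVector

section SymmetricProductState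

variable {ι κ 𝕜 : Type*} [Fintype ι] [Fintype κ] [RCLike 𝕜]

lemma vecMulVec_star_eq_of_productVector_comp_perm {f : ι → κ → 𝕜}
    (hf : ∀ j, ∑ k, ‖f j k‖ ^ 2 = 1)
    (h : ∀ (σ : Equiv.Perm ι) u, productVector f (u ∘ σ) = productVector f u) (i j : ι) :
    vecMulVec (f i) (star (f i)) = vecMulVec (f j) (star (f j)) := by
  classical
  have ne_zero (m : ι) : f m ≠ 0 := fun hm => by simpa [hm] using hf m
  simpa [dotProduct_star_eq_sum_norm_sq, hf] using
    dotProduct_star_smul_vecMulVec_star_of_proportional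
      (proportional_of_productVector_comp_swap ne_zero (h (Equiv.swap j i)))

theorem symmetric_separable_is_convex_mix_of_tensor_powers_general {I : Type*} [Fintype I]
    {p : I → ℝ} (hp : ∀ i, 0 ≤ p i) {φ : I → ι → κ → 𝕜} (hφ : ∀ i j, ∑ k, ‖φ i j k‖ ^ 2 = 1)
    {ρ : Matrix (ι → κ) (ι → κ) 𝕜}
    (hρ : ∀ u u', ρ u u' = ∑ i, (p i : 𝕜) * ∏ j, φ i j (u j) * (starRingEnd 𝕜) (φ i j (u' j)))
    (hsym : ∀ (σ : Equiv.Perm ι) (u u' : ι → κ), ρ (u ∘ σ) u' = ρ u u') (j₀ : ι)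
    (u u' : ι → κ) :
    ρ u u' = ∑ i, (p i : 𝕜) * ∏ j, φ i j₀ (u j) * (starRingEnd 𝕜) (φ i j₀ (u' j)) := by
  have ρ_eq : ρ =
      ∑ i, p i • vecMulVec (productVector (φ i)) (star (productVector (φ i))) := by
    ext v v'
    simp [hρ, Matrix.sum_apply, vecMulVec_star_productVector_apply, RCLike.real_smul_eq_coe_mul]
  rw [hρ]
  refine sum_congr rfl fun i _ => ?_
  obtain hi | hi := eq_or_ne (p i) 0
  · simp [hi]
  have comp_perm (σ : Equiv.Perm ι) (v : ι → κ) :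
      productVector (φ i) (v ∘ σ) = productVector (φ i) v :=
    apply_eq_of_sum_smul_vecMulVec_star_row_eq hp (ρ_eq ▸ funext (hsym σ v)) hi
  have projector_eq (j : ι) := vecMulVec_star_eq_of_productVector_comp_perm (hφ i) comp_perm j j₀
  exact congrArg _ (prod_congr rfl fun j _ => congrFun₂ (projector_eq j) (u j) (u' j))

end SymmetricProductState

/-- Sym ∩ SEP characterization: a fully separable state that is symmetric
(`ρ_{u∘σ,u'∘σ'} = ρ_{u,u'}` for all permutations `σ, σ'`) is a convex combination of
`n`-fold tensor powers of pure states. -/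
theorem symmetric_separable_is_convex_mix_of_tensor_powers {n d : ℕ} (hn : 1 ≤ n) (hd : 1 ≤ d)
    {I : Type*} [Fintype I] (p : I → ℝ) (hp : ∀ i, 0 < p i) (hpsum : ∑ i, p i = 1)
    (φ : I → Fin n → Fin d → ℂ) (hφ : ∀ i j, ∑ k, ‖φ i j k‖ ^ 2 = 1)
    (ρ : Matrix (Fin n → Fin d) (Fin n → Fin d) ℂ)
    (hρ : ∀ u u', ρ u u' =
      ∑ i, (p i : ℂ) * ∏ j, φ i j (u j) * (starRingEnd ℂ) (φ i j (u' j)))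
    (hsym : ∀ (σ σ' : Equiv.Perm (Fin n)) (u u' : Fin n → Fin d),
      ρ (u ∘ σ) (u' ∘ σ') = ρ u u') :
    ∃ ψ : I → Fin d → ℂ, (∀ i, ∑ k, ‖ψ i k‖ ^ 2 = 1) ∧
      ∀ u u', ρ u u' =
        ∑ i, (p i : ℂ) * ∏ j, ψ i (u j) * (starRingEnd ℂ) (ψ i (u' j)) := by
  exact ⟨fun i => φ i ⟨0, hn⟩, fun i => hφ i _,
    symmetric_separable_is_convex_mix_of_tensor_powers_general (fun i => (hp i).le) hφ hρ
      (fun σ => hsym σ 1) _⟩
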